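/- Let m ≥ 2 be an integer, ε = exp(2πi/m), ν_1, …, ν_{m-1} ∈ ℝ, and set k_j = mν_j + m - j for 1 ≤ j ≤ m-1. Let E_m denote the space of entire functions g : ℂ → ℂ that are ε-invariant (g(εx) = g(x) for all x). Suppose R : E_m → E_m is a linear operator such that (i) B_m(Rg)(x) = R(g^{(m)})(x) for all g ∈ E_m and x ≠ 0, and (ii) R maps constant functions to constant functions. Define: I(g)(x) = ∫_0^x g(t) dt (integral along the segment from 0 to x); A_m = identity; A_{m-1} = d/dx; and for 1 ≤ j ≤ m-2, A_j = (d/dx + k_{j+1}/x) ∘ (d/dx + k_{j+2}/x) ∘ ⋯ ∘ (d/dx + k_{m-1}/x) ∘ (d/dx) (first-order operators g ↦ g' + (k_l/x)g composed after a differentiation). Define the operator V_m acting on entire functions f by V_m(f) = ∑_{j=1}^{m} A_j(R(I^{m-j}(p_j(f)))). Then V_m intertwines the complex Dunkl operator and ordinary differentiation: for every entire f and every x ≠ 0, T(k)(V_m f)(x) = V_m(f')(x). -/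

import Mathlib

/-!
Give a function `g` weight `j` when `g (ε y) = ε ^ j * g y`. The projection `p_j f` has weight `j`,
integration raises the weight by one, and every first-order operator `d/dx + c/x` lowers it by one.
Hence `h_j = I^{m-j} (p_j f)` is `ε`-invariant, and the `j`-th summand `A_j (R h_j)` of `V_m f` has
weight `j` again (`opA_weight`). By orthogonality of the characters of the `m`-th roots of unity
(`proj_of_weight`), `p_i (V_m f) = A_i (R h_i)`, so on `x ≠ 0` the Dunkl operator acts on the `i`-th
summand as `d/dx + k_i/x` (as `d/dx` for `i = m`), which turns `A_i` into `A_{i-1}`: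
`T(k) (V_m f) = ∑_{i=1}^m A_{i-1} (R h_i)`.

On the other side `p_j (f') = (p_{j+1} f)'` (`proj_deriv`), and `I` undoes the derivative up to the
value at `0`. For `j + 1 < m` that value vanishes because the weight is nontrivial, so the `j`-th
summand of `V_m (f')` is `A_j (R h_{j+1})`. For `j + 1 = m` the value at `0` is a constant, which `R`
sends to a constant and `A_{m-1} = d/dx` kills. For `j = m` the summand is `R ((p_1 f)')`, and
`(p_1 f)'` is the `m`-th derivative of `h_1`, so the intertwining property of `R` gives
`B_m (R h_1) = A_0 (R h_1)`.
-/

/-- `ε = exp(2πi/m)`, a primitive `m`-th root of unity. -/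
noncomputable def eps (m : ℕ) : ℂ := Complex.exp (2 * Real.pi * Complex.I / m)

/-- The projection operator `p_i(f)(x) = (1/m) ∑_{j=0}^{m-1} ε^{-ij} f(ε^j x)`. -/
noncomputable def proj (m : ℕ) (i : ℤ) (f : ℂ → ℂ) (x : ℂ) : ℂ :=
  (m : ℂ)⁻¹ * ∑ j ∈ Finset.range m, eps m ^ (-(i * j)) * f (eps m ^ j * x)

/-- The complex Dunkl operator of type `G(m,1,1)`:
`T(k)f(x) = f'(x) + (1/x) ∑_{i=1}^{m-1} k_i p_i(f)(x)`, defined for `x ≠ 0`. -/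
noncomputable def dunkl (m : ℕ) (k : ℕ → ℂ) (f : ℂ → ℂ) (x : ℂ) : ℂ :=
  deriv f x + x⁻¹ * ∑ i ∈ Finset.Icc 1 (m - 1), k i * proj m i f x

/-- The first-order operator `g ↦ g' + (c/x) g` acting on functions `ℂ → ℂ`. -/
noncomputable def firstOrderOp (c : ℂ) (g : ℂ → ℂ) : ℂ → ℂ :=
  fun x => deriv g x + c / x * g x

/-- The operators `A_j`: `A_m = id`, `A_{m-1} = d/dx`, and for `1 ≤ j ≤ m-2`
`A_j = (d/dx + k_{j+1}/x) ∘ ⋯ ∘ (d/dx + k_{m-1}/x) ∘ (d/dx)` (`d/dx` applied first).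
In particular `A_0` is the hyper-Bessel operator `B_m`. -/
noncomputable def opA (m : ℕ) (k : ℕ → ℂ) (j : ℕ) (g : ℂ → ℂ) : ℂ → ℂ :=
  if j = m then g
  else (((List.range (m - 1 - j)).map (fun l => firstOrderOp (k (j + 1 + l)))).foldr
      (· ∘ ·) id) (deriv g)

/-- The hyper-Bessel operator `B_m = (d/dx + k_1/x) ∘ ⋯ ∘ (d/dx + k_{m-1}/x) ∘ (d/dx)`. -/
noncomputable def hyperBesselOpC (m : ℕ) (k : ℕ → ℂ) : (ℂ → ℂ) → (ℂ → ℂ) := opA m k 0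

/-- The integration operator `I(g)(x) = ∫_0^x g(t) dt` along the segment from `0` to `x`,
parametrized as `x ∫_0^1 g(xt) dt`. -/
noncomputable def integ (g : ℂ → ℂ) : ℂ → ℂ :=
  fun x => x * ∫ t in (0:ℝ)..1, g (x * t)

/-- The intertwining operator `V_m(f) = ∑_{j=1}^m A_j(R(I^{m-j}(p_j f)))`. -/
noncomputable def Vm (m : ℕ) (k : ℕ → ℂ) (R : (ℂ → ℂ) → (ℂ → ℂ)) (f : ℂ → ℂ) : ℂ → ℂ :=
  fun x => ∑ j ∈ Finset.Icc 1 m, opA m k j (R (integ^[m - j] (proj m j f))) x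

/-! ### The root of unity and the projections -/

lemma eps_primitive {m : ℕ} (hm : 2 ≤ m) : IsPrimitiveRoot (eps m) m :=
  Complex.isPrimitiveRoot_exp m (by omega)

lemma eps_ne_zero (m : ℕ) : eps m ≠ 0 := Complex.exp_ne_zero _

lemma weight_pow {m : ℕ} {g : ℂ → ℂ} {a : ℂ} (h : ∀ y, g (eps m * y) = a * g y) (l : ℕ) (y : ℂ) :
    g (eps m ^ l * y) = a ^ l * g y := by
  induction l with
  | zero => simp
  | succ l ih => rw [pow_succ', mul_assoc, h, ih, pow_succ', mul_assoc]

/-- Orthogonality of characters: `p_i` is the identity on weight `i` and kills the other weights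
`j ∈ {1, …, m}`. -/
lemma proj_of_weight {m : ℕ} (hm : 2 ≤ m) {i j : ℕ} (hi : 1 ≤ i) (him : i ≤ m) (hj : 1 ≤ j)
    (hjm : j ≤ m) {g : ℂ → ℂ} (h : ∀ y, g (eps m * y) = eps m ^ j * g y) (x : ℂ) :
    proj m i g x = if i = j then g x else 0 := by
  have hm0 : (m : ℂ) ≠ 0 := by exact_mod_cast (by omega : m ≠ 0)
  have e0 := eps_ne_zero m
  have key : ∀ l : ℕ, eps m ^ (-((i : ℤ) * l)) * g (eps m ^ l * x)
      = (eps m ^ ((j : ℤ) - i)) ^ l * g x := by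
    intro l
    rw [weight_pow h, ← mul_assoc, ← pow_mul, ← zpow_natCast, ← zpow_natCast, ← zpow_mul,
      ← zpow_add₀ e0]
    congr 2
    push_cast
    ring
  unfold proj
  simp only [key]
  rw [← Finset.sum_mul]
  split_ifs with hij
  · subst hij
    simp [hm0]
  · have hne : eps m ^ ((j : ℤ) - i) ≠ 1 := by
      intro h1
      rw [(eps_primitive hm).zpow_eq_one_iff_dvd] at h1
      obtain ⟨c, hc⟩ := h1
      have hc0 : c ≠ 0 := by rintro rfl; simp at hc; omega
      rcases lt_or_gt_of_ne hc0 with h | h <;> nlinarith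
    have hone : (eps m ^ ((j : ℤ) - i)) ^ m = 1 := by
      rw [← zpow_natCast, ← zpow_mul, mul_comm, zpow_mul, zpow_natCast,
        (eps_primitive hm).pow_eq_one, one_zpow]
    rw [geom_sum_eq hne, hone]
    simp

lemma proj_sum (m : ℕ) (i : ℤ) (s : Finset ℕ) (G : ℕ → ℂ → ℂ) (x : ℂ) :
    proj m i (fun y => ∑ j ∈ s, G j y) x = ∑ j ∈ s, proj m i (G j) x := by
  unfold proj
  rw [← Finset.mul_sum, Finset.sum_comm]
  simp only [Finset.mul_sum]

lemma proj_differentiable (m : ℕ) (i : ℤ) {f : ℂ → ℂ} (hf : Differentiable ℂ f) :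
    Differentiable ℂ (proj m i f) := by
  unfold proj
  fun_prop

lemma proj_deriv (m : ℕ) (i : ℤ) {f : ℂ → ℂ} (hf : Differentiable ℂ f) :
    proj m i (deriv f) = deriv (proj m (i + 1) f) := by
  ext x
  symm
  apply HasDerivAt.deriv
  unfold proj
  apply HasDerivAt.const_mul
  apply HasDerivAt.fun_sum
  intro l _
  have h1 : HasDerivAt (fun y => eps m ^ l * y) (eps m ^ l) x := by
    simpa using (hasDerivAt_id x).const_mul (eps m ^ l)
  have h2 := ((hf (eps m ^ l * x)).hasDerivAt.comp x h1).const_mul (eps m ^ (-((i + 1) * l)))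
  have : eps m ^ (-(i * (l : ℤ))) = eps m ^ (-((i + 1) * (l : ℤ))) * eps m ^ l := by
    rw [← zpow_natCast (eps m) l, ← zpow_add₀ (eps_ne_zero m)]
    congr 1
    ring
  rw [this, mul_assoc, mul_comm (eps m ^ l) (deriv f _)]
  exact h2

lemma proj_weight {m : ℕ} (hm : 2 ≤ m) (i : ℕ) (f : ℂ → ℂ) (y : ℂ) :
    proj m i f (eps m * y) = eps m ^ i * proj m i f y := by
  have e0 := eps_ne_zero m
  have hp := (eps_primitive hm).pow_eq_one
  unfold proj
  rw [mul_left_comm]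
  congr 1
  rw [Finset.mul_sum]
  -- The shifted summand: both sides are sums of `F` over a full period of length `m`.
  set F : ℕ → ℂ := fun l => eps m ^ i * (eps m ^ (-((i : ℤ) * l)) * f (eps m ^ l * y)) with hF
  have h1 : ∀ l : ℕ, eps m ^ (-((i : ℤ) * l)) * f (eps m ^ l * (eps m * y)) = F (l + 1) := by
    intro l
    simp only [hF]
    rw [← mul_assoc (eps m ^ i), ← zpow_natCast (eps m) i, ← zpow_add₀ e0, pow_succ, mul_assoc]
    congr 2
    push_cast
    ring
  have h2 : F m = F 0 := by
    simp only [hF]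
    rw [hp, mul_comm (i : ℤ) m, ← mul_neg, zpow_mul, zpow_natCast, hp]
    simp
  simp only [h1]
  have h3 := Finset.sum_range_succ F m
  rw [Finset.sum_range_succ', h2] at h3
  exact add_right_cancel h3

lemma proj_succ_eq_one {m : ℕ} (hm : 2 ≤ m) (f : ℂ → ℂ) :
    proj m ((m : ℤ) + 1) f = proj m 1 f := by
  ext x
  unfold proj
  congr 1
  refine Finset.sum_congr rfl fun l _ => ?_
  congr 1
  have : -(((m : ℤ) + 1) * l) = (m : ℤ) * (-l) + -(1 * (l : ℤ)) := by ring
  rw [this, zpow_add₀ (eps_ne_zero m), zpow_mul, zpow_natCast, (eps_primitive hm).pow_eq_one]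
  simp

/-! ### Integration -/

lemma integ_eq_sub {g F : ℂ → ℂ} (hg : Continuous g) (hF : ∀ z, HasDerivAt F (g z) z) (x : ℂ) :
    integ g x = F x - F 0 := by
  have h := intervalIntegral.integral_unitInterval_deriv_eq_sub (f := F) (f' := g)
    (z₀ := (0 : ℂ)) (z₁ := x) (by fun_prop) (fun t _ => hF _)
  simp only [zero_add, smul_eq_mul, Complex.real_smul] at h
  rw [← h]
  unfold integ
  simp only [mul_comm x]

lemma integ_hasDerivAt {g : ℂ → ℂ} (hg : Differentiable ℂ g) (x : ℂ) :
    HasDerivAt (integ g) (g x) x := by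
  obtain ⟨F, hF⟩ := hg.isExactOn_univ
  have hF' : ∀ z, HasDerivAt F (g z) z := fun z => hF z (Set.mem_univ z)
  have : integ g = fun x => F x - F 0 := funext (integ_eq_sub hg.continuous hF')
  rw [this]
  exact (hF' x).sub_const _

lemma integ_differentiable {g : ℂ → ℂ} (hg : Differentiable ℂ g) : Differentiable ℂ (integ g) :=
  fun x => (integ_hasDerivAt hg x).differentiableAt

lemma integ_deriv {g : ℂ → ℂ} (hg : Differentiable ℂ g) (x : ℂ) :
    integ (deriv g) x = g x - g 0 :=
  integ_eq_sub hg.deriv.continuous (fun z => (hg z).hasDerivAt) x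

lemma integ_weight {m : ℕ} {g : ℂ → ℂ} {a : ℂ} (h : ∀ y, g (eps m * y) = a * g y) (y : ℂ) :
    integ g (eps m * y) = (eps m * a) * integ g y := by
  unfold integ
  simp only [mul_assoc, h, intervalIntegral.integral_const_mul]
  ring

lemma iter_integ_differentiable (n : ℕ) {g : ℂ → ℂ} (hg : Differentiable ℂ g) :
    Differentiable ℂ (integ^[n] g) := by
  induction n with
  | zero => exact hg
  | succ n ih => rw [Function.iterate_succ_apply']; exact integ_differentiable ih

lemma iter_integ_weight (n : ℕ) {m : ℕ} {g : ℂ → ℂ} {a : ℂ}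
    (h : ∀ y, g (eps m * y) = a * g y) (y : ℂ) :
    (integ^[n] g) (eps m * y) = (eps m ^ n * a) * (integ^[n] g) y := by
  induction n generalizing y with
  | zero => simpa using h y
  | succ n ih => rw [Function.iterate_succ_apply', integ_weight ih, pow_succ', mul_assoc (eps m) (eps m ^ n)]

lemma iteratedDeriv_iter_integ (n : ℕ) {g : ℂ → ℂ} (hg : Differentiable ℂ g) :
    iteratedDeriv n (integ^[n] g) = g := by
  induction n with
  | zero => simp
  | succ n ih =>
    rw [iteratedDeriv_succ', Function.iterate_succ_apply']
    rwa [funext fun x => (integ_hasDerivAt (iter_integ_differentiable n hg) x).deriv]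

/-! ### The operators `A_j` -/

lemma opA_self (m : ℕ) (k : ℕ → ℂ) (g : ℂ → ℂ) : opA m k m g = g := by
  simp [opA]

lemma opA_last (n : ℕ) (k : ℕ → ℂ) (g : ℂ → ℂ) : opA (n + 1) k n g = deriv g := by
  simp [opA]

lemma opA_step {m j : ℕ} (hj : j + 1 < m) (k : ℕ → ℂ) (g : ℂ → ℂ) :
    opA m k j g = firstOrderOp (k (j + 1)) (opA m k (j + 1) g) := by
  unfold opA
  rw [if_neg (by omega), if_neg (by omega)]
  obtain ⟨d, hd⟩ : ∃ d, m = j + d + 2 := ⟨m - j - 2, by omega⟩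
  have h1 : m - 1 - j = d + 1 := by omega
  have h2 : m - 1 - (j + 1) = d := by omega
  rw [h1, h2, List.range_succ_eq_map, List.map_cons, List.foldr_cons, List.map_map]
  have h3 : (fun l => firstOrderOp (k (j + 1 + l))) ∘ Nat.succ
      = fun l => firstOrderOp (k (j + 1 + 1 + l)) := by
    funext l
    rw [Function.comp_apply, show j + 1 + l.succ = j + 1 + 1 + l by omega]
  rw [h3]
  rfl

lemma deriv_weight {m : ℕ} {g : ℂ → ℂ} {a : ℂ} (h : ∀ y, g (eps m * y) = a * g y) (y : ℂ) :
    eps m * deriv g (eps m * y) = a * deriv g y := by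
  have h1 := deriv_comp_mul_left (eps m) g y
  rw [funext h, deriv_const_mul_field, smul_eq_mul] at h1
  exact h1.symm

lemma firstOrderOp_weight {m : ℕ} {g : ℂ → ℂ} {a : ℂ} (c : ℂ)
    (h : ∀ y, g (eps m * y) = a * g y) (y : ℂ) :
    eps m * firstOrderOp c g (eps m * y) = a * firstOrderOp c g y := by
  have e0 := eps_ne_zero m
  unfold firstOrderOp
  rw [mul_add, deriv_weight h, h, mul_add]
  congr 1
  rcases eq_or_ne y 0 with rfl | hy
  · simp
  · field_simp

/-- `A_j` has `m - j` first-order factors, so it lowers the weight from `0 ≡ m` to `j`. -/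
lemma opA_weight {m : ℕ} (hm : 2 ≤ m) (k : ℕ → ℂ) {g : ℂ → ℂ} (h : ∀ y, g (eps m * y) = g y)
    {j : ℕ} (hj : j ≤ m) : ∀ y, opA m k j g (eps m * y) = eps m ^ j * opA m k j g y := by
  have e0 := eps_ne_zero m
  induction hj using Nat.decreasingInduction with
  | self =>
    intro y
    rw [opA_self, h, (eps_primitive hm).pow_eq_one, one_mul]
  | of_succ j hj ih =>
    intro y
    apply mul_left_cancel₀ e0
    rw [← mul_assoc, ← pow_succ']
    rcases Nat.lt_or_ge (j + 1) m with hlt | hge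
    · rw [opA_step hlt]
      exact firstOrderOp_weight _ ih y
    · obtain rfl : m = j + 1 := by omega
      rw [opA_last]
      refine deriv_weight (fun y => ?_) y
      rw [h, (eps_primitive hm).pow_eq_one, one_mul]

lemma opA_differentiableOn {m : ℕ} (k : ℕ → ℂ) {g : ℂ → ℂ} (hg : Differentiable ℂ g)
    {j : ℕ} (hj : j ≤ m) : DifferentiableOn ℂ (opA m k j g) {0}ᶜ := by
  induction hj using Nat.decreasingInduction with
  | self => rw [opA_self]; exact hg.differentiableOn
  | of_succ j hj ih =>
    rcases Nat.lt_or_ge (j + 1) m with hlt | hge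
    · rw [opA_step hlt]
      unfold firstOrderOp
      refine (ih.deriv isOpen_compl_singleton).add (DifferentiableOn.mul ?_ ih)
      exact (differentiableOn_const _).div differentiableOn_id (fun y hy => hy)
    · obtain rfl : m = j + 1 := by omega
      rw [opA_last]
      exact hg.deriv.differentiableOn

lemma sum_Icc_one_eq_range (n : ℕ) (F : ℕ → ℂ) :
    ∑ j ∈ Finset.Icc 1 n, F j = ∑ j ∈ Finset.range n, F (j + 1) := by
  induction n with
  | zero => simp
  | succ n ih => rw [Finset.sum_Icc_succ_top (by omega), ih, Finset.sum_range_succ]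

/-! ### The intertwining relation -/

/-- If `R` preserves the space of `ε`-invariant entire functions, is linear there, intertwines
`B_m` with `d^m/dx^m` there, and maps constants to constants, then `V_m` intertwines the complex
Dunkl operator `T(k)` with `d/dx`: `T(k) ∘ V_m = V_m ∘ d/dx` on entire functions. -/
theorem Vm_intertwines (m : ℕ) (hm : 2 ≤ m) (ν : ℕ → ℝ) (k : ℕ → ℂ)
    (hk : ∀ j, 1 ≤ j → j ≤ m - 1 → k j = (m : ℂ) * (ν j : ℂ) + m - j)
    (R : (ℂ → ℂ) → (ℂ → ℂ))
    (hRmem : ∀ g : ℂ → ℂ, Differentiable ℂ g → (∀ x, g (eps m * x) = g x) →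
      Differentiable ℂ (R g) ∧ ∀ x, R g (eps m * x) = R g x)
    (hRlin : ∀ (c : ℂ) (g h : ℂ → ℂ),
      Differentiable ℂ g → (∀ x, g (eps m * x) = g x) →
      Differentiable ℂ h → (∀ x, h (eps m * x) = h x) →
      R (fun x => c * g x + h x) = fun x => c * R g x + R h x)
    (hRB : ∀ g : ℂ → ℂ, Differentiable ℂ g → (∀ x, g (eps m * x) = g x) →
      ∀ x : ℂ, x ≠ 0 → hyperBesselOpC m k (R g) x = R (iteratedDeriv m g) x)
    (hRconst : ∀ c : ℂ, ∃ c' : ℂ, R (fun _ => c) = fun _ => c')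
    (f : ℂ → ℂ) (hf : Differentiable ℂ f) (x : ℂ) (hx : x ≠ 0) :
    dunkl m k (Vm m k R f) x = Vm m k R (deriv f) x := by
  obtain ⟨n, rfl⟩ : ∃ n, m = n + 1 := ⟨m - 1, by omega⟩
  set m := n + 1 with hmn
  have hp := (eps_primitive hm).pow_eq_one
  -- The `ε`-invariant entire functions `h_j = I^{m-j} (p_j f)`.
  set H : ℕ → ℂ → ℂ := fun j => integ^[m - j] (proj m j f) with hH
  have Hd : ∀ j, Differentiable ℂ (H j) := fun j =>
    iter_integ_differentiable _ (proj_differentiable m j hf)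
  have Hinv : ∀ j, j ≤ m → ∀ y, H j (eps m * y) = H j y := by
    intro j hj y
    have := iter_integ_weight (m - j) (proj_weight hm j f) y
    rwa [← pow_add, Nat.sub_add_cancel hj, hp, one_mul] at this
  have RHd : ∀ j, j ≤ m → Differentiable ℂ (R (H j)) := fun j hj =>
    (hRmem _ (Hd j) (Hinv j hj)).1
  have RHinv : ∀ j, j ≤ m → ∀ y, R (H j) (eps m * y) = R (H j) y := fun j hj =>
    (hRmem _ (Hd j) (Hinv j hj)).2
  set G : ℕ → ℂ → ℂ := fun j => opA m k j (R (H j)) with hG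
  have hV : Vm m k R f = fun y => ∑ j ∈ Finset.Icc 1 m, G j y := rfl
  have Gdiff : ∀ j, j ≤ m → DifferentiableAt ℂ (G j) x := fun j hj =>
    (opA_differentiableOn k (RHd j hj) hj).differentiableAt (isOpen_compl_singleton.mem_nhds hx)
  have hproj : ∀ i ∈ Finset.Icc 1 n, proj m i (Vm m k R f) x = G i x := by
    intro i hi
    rw [Finset.mem_Icc] at hi
    have hδ : ∀ j ∈ Finset.Icc 1 m, proj m i (G j) x = if i = j then G j x else 0 := by
      intro j hj
      rw [Finset.mem_Icc] at hj
      exact proj_of_weight hm hi.1 (by omega) hj.1 hj.2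
        (opA_weight hm k (RHinv j hj.2) hj.2) x
    rw [hV, proj_sum, Finset.sum_congr rfl hδ]
    rw [Finset.sum_ite_eq, if_pos (Finset.mem_Icc.2 ⟨hi.1, by omega⟩)]
  have hderiv : deriv (Vm m k R f) x = ∑ j ∈ Finset.Icc 1 m, deriv (G j) x := by
    rw [hV]
    exact deriv_fun_sum fun j hj => Gdiff j (Finset.mem_Icc.1 hj).2
  have hleft : dunkl m k (Vm m k R f) x
      = ∑ i ∈ Finset.range (n + 1), opA m k i (R (H (i + 1))) x := by
    have hk' : ∑ i ∈ Finset.Icc 1 n, k i * proj m i (Vm m k R f) x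
        = ∑ i ∈ Finset.Icc 1 n, k i * G i x :=
      Finset.sum_congr rfl fun i hi => by rw [hproj i hi]
    unfold dunkl
    rw [hderiv, show m - 1 = n from rfl, hk', sum_Icc_one_eq_range,
      sum_Icc_one_eq_range, Finset.sum_range_succ, Finset.sum_range_succ, add_right_comm,
      Finset.mul_sum, ← Finset.sum_add_distrib]
    congr 1
    · refine Finset.sum_congr rfl fun i hi => ?_
      rw [Finset.mem_range] at hi
      rw [opA_step (by omega)]
      simp only [firstOrderOp, hG]
      ring
    · simp only [hG]
      rw [opA_last, ← hmn, opA_self]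
  -- For `j < m`, the `j`-th summand of `V_m` at the derivative of `f` is `A_j (R h_{j+1})`.
  have hmid : ∀ i ∈ Finset.range n,
      opA m k (i + 1) (R (integ^[m - (i + 1)] (proj m ((i + 1 : ℕ) : ℤ) (deriv f)))) x
        = opA m k (i + 1) (R (H (i + 1 + 1))) x := by
    intro i hi
    rw [Finset.mem_range] at hi
    have hP := proj_differentiable m ((i + 1 + 1 : ℕ) : ℤ) hf
    set P := proj m ((i + 1 + 1 : ℕ) : ℤ) f with hPdef
    have e1 : integ (proj m ((i + 1 : ℕ) : ℤ) (deriv f)) = fun y => P y - P 0 := by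
      rw [proj_deriv m _ hf]
      have : ((i + 1 : ℕ) : ℤ) + 1 = ((i + 1 + 1 : ℕ) : ℤ) := by push_cast; ring
      rw [this]
      exact funext (integ_deriv hP)
    rw [show m - (i + 1) = (m - (i + 1 + 1)) + 1 by omega, Function.iterate_succ_apply, e1]
    rcases Nat.lt_or_ge (i + 1 + 1) m with hlt | hge
    · have hP0 : P 0 = 0 := by
        -- A nontrivial weight forces the value at `0` to vanish.
        have h0 := proj_weight hm (i + 1 + 1) f 0
        rw [mul_zero, ← hPdef] at h0
        have hne := (eps_primitive hm).pow_ne_one_of_pos_of_lt (by omega) hlt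
        by_contra hc
        exact hne (mul_right_cancel₀ hc (by rw [one_mul]; exact h0.symm))
      simp only [hP0, sub_zero]
      rfl
    · obtain rfl : n = i + 1 := by omega
      have hsub : m - (i + 1 + 1) = 0 := by omega
      have hHP : H (i + 1 + 1) = P := by
        simp only [hH, hsub, Function.iterate_zero, id_eq, hPdef]
      have hPinv : ∀ y, P (eps m * y) = P y := hHP ▸ Hinv (i + 1 + 1) (by omega)
      rw [hsub, Function.iterate_zero, id_eq, hHP, opA_last]
      obtain ⟨c', hc'⟩ := hRconst 1
      have hl := hRlin (-P 0) (fun _ => 1) P (by fun_prop) (fun _ => rfl) hP hPinv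
      have e2 : (fun y => P y - P 0) = fun y => -P 0 * 1 + P y := by
        ext y
        ring
      rw [e2, hl, hc', opA_last]
      simp
  have htop : R (proj m (m : ℤ) (deriv f)) x = opA m k 0 (R (H 1)) x := by
    have h1 := hRB (H 1) (Hd 1) (Hinv 1 (by omega)) x hx
    have hP := proj_differentiable m ((1 : ℕ) : ℤ) hf
    have e1 : iteratedDeriv m (H 1) = proj m (m : ℤ) (deriv f) := by
      rw [proj_deriv m _ hf, proj_succ_eq_one hm]
      simp only [hH]
      rw [hmn, iteratedDeriv_succ, show n + 1 - 1 = n from rfl, iteratedDeriv_iter_integ n hP]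
      rfl
    rw [e1] at h1
    exact h1.symm
  rw [hleft, Finset.sum_range_succ']
  unfold Vm
  rw [sum_Icc_one_eq_range, Finset.sum_range_succ, Finset.sum_congr rfl hmid]
  congr 1
  rw [← hmn, opA_self, Nat.sub_self, Function.iterate_zero, id_eq, htop]
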